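/- Let f be a non-nilpotent linear operator on a nonzero finite-dimensional complex vector space V, let ρ(f) be its spectral radius, and let ‖·‖ be a norm on End(V). Then the polynomial growth rate s(f) = lim_{n→∞} (log‖f^n‖ − n·log ρ(f))/log n equals k − 1, where k is the maximum, over all eigenvalues λ of f with |λ| = ρ(f), of the least positive integer j such that ker((f − λ·id_V)^j) = ker((f − λ·id_V)^{j+1}); equivalently, k is the maximal size of a Jordan block of f whose eigenvalue has absolute value ρ(f). -/

import Mathlib

/-- The spectral radius of an endomorphism of a finite-dimensional complex vector
space: the maximal absolute value of the roots in `ℂ` of its characteristic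
polynomial. -/
noncomputable def specRadEnd {V : Type*} [AddCommGroup V] [Module ℂ V]
    [FiniteDimensional ℂ V] (f : Module.End ℂ V) : ℝ :=
  ((((LinearMap.charpoly f).roots.map fun z => ‖z‖₊).sup : NNReal) : ℝ)

/-!
On the generalized eigenspace of `f` for `μ`, the binomial theorem gives
`f ^ n x = ∑ i, choose n i * μ ^ (n - i) • (f - μ) ^ i x`, and `choose n i * μ ^ (n - i)` has exact
order `n ^ i * |μ| ^ n`. So every orbit `f ^ n x` is `O(n ^ (k - 1) * ρ ^ n)`, where `k` is the
largest index of an eigenvalue of modulus `ρ`, and a coordinate of the orbit that starts a Jordan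
chain of length `k` attains this order. As `End(V)` is finite-dimensional, a norm `N` on it is
comparable with the matrix coefficients, whence `N (f ^ n) = Θ(n ^ (k - 1) * ρ ^ n)`.
-/

open Filter Topology Asymptotics

section Logarithm

-- `Real.log` is `log |·|` with `log 0 = 0`, and `a` eventually vanishes exactly where `b` does, so
-- signs and zeros are harmless.
theorem isBigO_log_sub_log_of_isTheta {α : Type*} {l : Filter α} {a b : α → ℝ} (h : a =Θ[l] b) :
    (fun x => Real.log (a x) - Real.log (b x)) =O[l] fun _ => (1 : ℝ) := by
  obtain ⟨C, hC, hab⟩ := h.1.exists_pos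
  obtain ⟨c, hc, hba⟩ := h.2.exists_pos
  refine IsBigO.of_bound (max |Real.log C| |Real.log c|) ?_
  filter_upwards [hab.bound, hba.bound] with x hax hbx
  rw [norm_one, mul_one, Real.norm_eq_abs]
  rcases eq_or_ne (b x) 0 with hb | hb
  · have ha : a x = 0 := by simpa [hb] using hax
    simp [ha, hb]
  have hb' : 0 < ‖b x‖ := norm_pos_iff.2 hb
  have ha' : 0 < ‖a x‖ := pos_of_mul_pos_right (hb'.trans_le hbx) hc.le
  have hupper := Real.log_le_log ha' hax
  have hlower := Real.log_le_log hb' hbx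
  rw [Real.log_mul hC.ne' hb'.ne'] at hupper
  rw [Real.log_mul hc.ne' ha'.ne'] at hlower
  simp only [Real.norm_eq_abs, Real.log_abs] at hupper hlower
  have hCmax := (le_abs_self (Real.log C)).trans (le_max_left _ |Real.log c|)
  have hcmax := (le_abs_self (Real.log c)).trans (le_max_right |Real.log C| _)
  exact abs_le.2 ⟨by linarith, by linarith⟩

theorem tendsto_log_sub_mul_log_div_log {a : ℕ → ℝ} {ρ : ℝ} (hρ : ρ ≠ 0) {m : ℕ}
    (h : a =Θ[atTop] fun n : ℕ => (n : ℝ) ^ m * ρ ^ n) :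
    Tendsto (fun n : ℕ => (Real.log (a n) - n * Real.log ρ) / Real.log n) atTop (𝓝 (m : ℝ)) := by
  have hlog : (fun _ : ℕ => (1 : ℝ)) =o[atTop] fun n : ℕ => Real.log n :=
    Real.isLittleO_const_log_atTop.comp_tendsto tendsto_natCast_atTop_atTop
  have herror : Tendsto
      (fun n : ℕ => (Real.log (a n) - Real.log ((n : ℝ) ^ m * ρ ^ n)) / Real.log n) atTop (𝓝 0) :=
    ((isBigO_log_sub_log_of_isTheta h).trans_isLittleO hlog).tendsto_div_nhds_zero
  have hsum := herror.const_add (m : ℝ)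
  rw [add_zero] at hsum
  refine hsum.congr' ?_
  filter_upwards [eventually_gt_atTop 1] with n hn
  have hn0 : (n : ℝ) ≠ 0 := by positivity
  have hlogn : Real.log n ≠ 0 := (Real.log_pos (by exact_mod_cast hn)).ne'
  rw [Real.log_mul (pow_ne_zero _ hn0) (pow_ne_zero _ hρ), Real.log_pow, Real.log_pow]
  field_simp
  ring

end Logarithm

section BinomialWeights

variable {𝕜 : Type*} [RCLike 𝕜] {μ : 𝕜}

theorem isTheta_choose_mul_pow (hμ : μ ≠ 0) (i : ℕ) :
    (fun n : ℕ => (n.choose i : 𝕜) * μ ^ (n - i)) =Θ[atTop]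
      fun n : ℕ => (n : ℝ) ^ i * ‖μ‖ ^ n := by
  have hchoose : (fun n : ℕ => (n.choose i : 𝕜)) =Θ[atTop] fun n : ℕ => (n : ℝ) ^ i := by
    simpa only [← isTheta_norm_left (E' := 𝕜), RCLike.norm_natCast] using isTheta_choose i
  have hpow : (fun n : ℕ => μ ^ (n - i)) =Θ[atTop] fun n : ℕ => ‖μ‖ ^ n := by
    have hshift : (fun n : ℕ => μ ^ (n - i)) =ᶠ[atTop] fun n => (μ ^ i)⁻¹ * μ ^ n := by
      filter_upwards [eventually_ge_atTop i] with n hn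
      rw [pow_sub₀ _ hμ hn, mul_comm]
    refine hshift.trans_isTheta ?_
    rw [isTheta_const_mul_left (inv_ne_zero (pow_ne_zero i hμ))]
    simpa only [← norm_pow] using isTheta_rfl.norm_right
  exact hchoose.mul hpow

theorem isLittleO_choose_mul_pow {r : ℝ} (hμ : ‖μ‖ < r) (i : ℕ) :
    (fun n : ℕ => (n.choose i : 𝕜) * μ ^ (n - i)) =o[atTop] fun n : ℕ => r ^ n := by
  rcases eq_or_ne μ 0 with rfl | hμ0
  · refine (isLittleO_zero _ _).congr' ?_ EventuallyEq.rfl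
    filter_upwards [eventually_gt_atTop i] with n hn
    rw [zero_pow (Nat.sub_ne_zero_of_lt hn), mul_zero]
  · refine (isTheta_choose_mul_pow hμ0 i).trans_isLittleO ?_
    exact isLittleO_pow_const_mul_const_pow_const_pow_of_norm_lt i (by rwa [norm_norm])

theorem isLittleO_natCast_pow_mul_of_lt {i m : ℕ} (him : i < m) (u : ℕ → ℝ) :
    (fun n : ℕ => (n : ℝ) ^ i * u n) =o[atTop] fun n : ℕ => (n : ℝ) ^ m * u n :=
  ((isLittleO_pow_pow_atTop_of_lt him).comp_tendsto
    tendsto_natCast_atTop_atTop).mul_isBigO (isBigO_refl u atTop)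

theorem isBigO_natCast_pow_mul_of_le {i m : ℕ} (him : i ≤ m) (u : ℕ → ℝ) :
    (fun n : ℕ => (n : ℝ) ^ i * u n) =O[atTop] fun n : ℕ => (n : ℝ) ^ m * u n := by
  rcases him.lt_or_eq with hlt | rfl
  · exact (isLittleO_natCast_pow_mul_of_lt hlt u).isBigO
  · exact isBigO_refl _ _

end BinomialWeights

theorem pow_apply_eq_sum_of_mem_genEigenspace {R M : Type*} [CommRing R] [AddCommGroup M]
    [Module R M] {f : Module.End R M} {μ : R} {k : ℕ} {x : M} (hx : x ∈ f.genEigenspace μ k)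
    (n : ℕ) :
    (f ^ n) x = ∑ i ∈ Finset.range k,
      ((n.choose i : R) * μ ^ (n - i)) • ((f - μ • 1) ^ i) x := by
  have hbinom : (f ^ n) x = ∑ i ∈ Finset.range (n + 1),
      ((n.choose i : R) * μ ^ (n - i)) • ((f - μ • 1) ^ i) x := by
    have hcomm : Commute (f - μ • 1) (μ • (1 : Module.End R M)) :=
      (Commute.one_right _).smul_right μ
    have hpow := hcomm.add_pow n
    rw [sub_add_cancel] at hpow
    rw [hpow, LinearMap.sum_apply]
    refine Finset.sum_congr rfl fun i _ => ?_
    rw [smul_pow, one_pow, mul_smul_comm, mul_one, ← nsmul_eq_mul', ← Nat.cast_smul_eq_nsmul R,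
      smul_smul, LinearMap.smul_apply]
  have hkilled : ∀ i, k ≤ i → ((f - μ • 1) ^ i) x = 0 := fun i hi =>
    Module.End.pow_map_zero_of_le hi (Module.End.mem_genEigenspace_nat.1 hx)
  rw [hbinom, Finset.sum_subset (Finset.range_subset_range.2 (Nat.le_add_right (n + 1) k)),
    Finset.sum_subset (Finset.range_subset_range.2 (Nat.le_add_left k (n + 1)))]
  · intro i _ hi
    rw [hkilled i (by simpa using hi), smul_zero]
  · intro i _ hi
    rw [Nat.choose_eq_zero_of_lt (by simpa using hi), Nat.cast_zero, zero_mul, zero_smul]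

section Orbits

variable {𝕜 V F : Type*} [RCLike 𝕜] [AddCommGroup V] [Module 𝕜 V] [NormedAddCommGroup F]
  [NormedSpace 𝕜 F] {f : Module.End 𝕜 V} {μ : 𝕜} {x : V}

theorem isLittleO_map_pow_apply_of_mem_maxGenEigenspace {r : ℝ} (hμ : ‖μ‖ < r)
    (hx : x ∈ f.maxGenEigenspace μ) (T : V →ₗ[𝕜] F) :
    (fun n : ℕ => T ((f ^ n) x)) =o[atTop] fun n : ℕ => r ^ n := by
  obtain ⟨k, hk⟩ := (f.mem_maxGenEigenspace μ x).1 hx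
  simp_rw [pow_apply_eq_sum_of_mem_genEigenspace (Module.End.mem_genEigenspace_nat.2 hk), map_sum,
    map_smul]
  refine IsLittleO.fun_sum fun i _ => ?_
  simpa using (isLittleO_choose_mul_pow hμ i).smul_isBigO
    (isBigO_const_const (T (((f - μ • 1) ^ i) x)) one_ne_zero atTop (c' := (1 : ℝ)))

theorem isBigO_map_pow_apply_of_mem_genEigenspace (hμ : μ ≠ 0) {m : ℕ}
    (hx : x ∈ f.genEigenspace μ (m + 1 : ℕ)) (T : V →ₗ[𝕜] F) :
    (fun n : ℕ => T ((f ^ n) x)) =O[atTop] fun n : ℕ => (n : ℝ) ^ m * ‖μ‖ ^ n := by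
  simp_rw [pow_apply_eq_sum_of_mem_genEigenspace hx, map_sum, map_smul]
  refine IsBigO.fun_sum fun i hi => ?_
  have hweight := (isTheta_choose_mul_pow hμ i).1.trans
    (isBigO_natCast_pow_mul_of_le (Finset.mem_range_succ_iff.1 hi) fun n => ‖μ‖ ^ n)
  simpa using hweight.smul
    (isBigO_const_const (T (((f - μ • 1) ^ i) x)) one_ne_zero atTop (c' := (1 : ℝ)))

theorem isTheta_map_pow_apply_of_mem_genEigenspace (hμ : μ ≠ 0) {m : ℕ}
    (hx : x ∈ f.genEigenspace μ (m + 1 : ℕ)) {T : V →ₗ[𝕜] F}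
    (hT : T (((f - μ • 1) ^ m) x) ≠ 0) :
    (fun n : ℕ => T ((f ^ n) x)) =Θ[atTop] fun n : ℕ => (n : ℝ) ^ m * ‖μ‖ ^ n := by
  simp_rw [pow_apply_eq_sum_of_mem_genEigenspace hx, map_sum, map_smul, Finset.sum_range_succ]
  refine IsLittleO.add_isTheta (IsLittleO.fun_sum fun i hi => ?_) ?_
  · have hweight := (isTheta_choose_mul_pow hμ i).trans_isLittleO
      (isLittleO_natCast_pow_mul_of_lt (Finset.mem_range.1 hi) fun n => ‖μ‖ ^ n)
    simpa using hweight.smul_isBigO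
      (isBigO_const_const (T (((f - μ • 1) ^ i) x)) one_ne_zero atTop (c' := (1 : ℝ)))
  · simpa using (isTheta_choose_mul_pow hμ m).smul
      (isTheta_const_const hT (one_ne_zero (α := ℝ)) (l := atTop))

theorem isBigO_map_pow_apply {ρ : ℝ} (hρ : 0 < ρ) {m : ℕ}
    (hle : ∀ μ, f.HasEigenvalue μ → ‖μ‖ ≤ ρ)
    (hperiph : ∀ μ, f.HasEigenvalue μ → ‖μ‖ = ρ →
      f.maxGenEigenspace μ ≤ f.genEigenspace μ (m + 1 : ℕ))
    (hx : x ∈ ⨆ μ, f.maxGenEigenspace μ) (T : V →ₗ[𝕜] F) :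
    (fun n : ℕ => T ((f ^ n) x)) =O[atTop] fun n : ℕ => (n : ℝ) ^ m * ρ ^ n := by
  induction hx using Submodule.iSup_induction' with
  | zero => simpa only [map_zero] using isBigO_zero _ _
  | add x y _ _ hx hy => simpa only [map_add] using hx.add hy
  | mem μ x hx =>
    rcases eq_or_ne x 0 with rfl | hx0
    · simpa only [map_zero] using isBigO_zero _ _
    have hμ : f.HasEigenvalue μ :=
      Module.End.HasUnifEigenvalue.lt zero_lt_one ((Submodule.ne_bot_iff _).2 ⟨x, hx, hx0⟩)
    rcases (hle μ hμ).lt_or_eq with hlt | heq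
    · exact (isLittleO_map_pow_apply_of_mem_maxGenEigenspace hlt hx T).isBigO.trans
        (by simpa using isBigO_natCast_pow_mul_of_le m.zero_le fun n => ρ ^ n)
    · rw [← heq]
      exact isBigO_map_pow_apply_of_mem_genEigenspace (norm_pos_iff.1 (heq ▸ hρ))
        (hperiph μ hμ heq hx) T

theorem isBigO_map_pow [FiniteDimensional 𝕜 V] (htop : ⨆ μ, f.maxGenEigenspace μ = ⊤) {ρ : ℝ}
    (hρ : 0 < ρ) {m : ℕ} (hle : ∀ μ, f.HasEigenvalue μ → ‖μ‖ ≤ ρ)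
    (hperiph : ∀ μ, f.HasEigenvalue μ → ‖μ‖ = ρ →
      f.maxGenEigenspace μ ≤ f.genEigenspace μ (m + 1 : ℕ))
    (T : Module.End 𝕜 V →ₗ[𝕜] F) :
    (fun n : ℕ => T (f ^ n)) =O[atTop] fun n : ℕ => (n : ℝ) ^ m * ρ ^ n := by
  let b := Module.finBasis 𝕜 V
  have hdecomp : ∀ g : Module.End 𝕜 V, g = ∑ j, LinearMap.smulRightₗ (b.coord j) (g (b j)) :=
    fun g => b.ext fun i => by simp [Finsupp.single_apply]
  have hpow : ∀ n : ℕ, T (f ^ n) =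
      ∑ j, (T ∘ₗ LinearMap.smulRightₗ (b.coord j)) ((f ^ n) (b j)) := fun n => by
    conv_lhs => rw [hdecomp (f ^ n), map_sum]
    rfl
  simp_rw [hpow]
  exact IsBigO.fun_sum fun j _ =>
    isBigO_map_pow_apply hρ hle hperiph (htop ▸ Submodule.mem_top) _

end Orbits

section Index

variable {R M : Type*} [CommRing R] [AddCommGroup M] [Module R M] {f : Module.End R M} {μ : R}

theorem maxGenEigenspaceIndex_le {k : ℕ} (h : f.maxGenEigenspace μ ≤ f.genEigenspace μ k) :
    f.maxGenEigenspaceIndex μ ≤ k :=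
  Nat.sInf_le fun n hn => show f.genEigenspace μ k = f.genEigenspace μ n from
    le_antisymm ((f.genEigenspace μ).monotone (Nat.cast_le.2 hn))
      ((f.genEigenspace_le_maximal μ n).trans h)

variable [IsNoetherian R M]

theorem exists_mem_genEigenspace_pow_apply_ne_zero {m : ℕ}
    (h : f.maxGenEigenspaceIndex μ = m + 1) :
    ∃ x ∈ f.genEigenspace μ (m + 1 : ℕ), ((f - μ • 1) ^ m) x ≠ 0 := by
  by_contra! hzero
  have hle : f.maxGenEigenspace μ ≤ f.genEigenspace μ m := by
    rw [f.maxGenEigenspace_eq, h]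
    exact fun x hx => Module.End.mem_genEigenspace_nat.2 (hzero x hx)
  exact (maxGenEigenspaceIndex_le hle).not_gt (h ▸ m.lt_succ_self)

end Index

theorem isLeast_ker_pow_eq_ker_pow_succ {K V : Type*} [Field K] [AddCommGroup V] [Module K V]
    [FiniteDimensional K V] {f : Module.End K V} {μ : K} (hμ : f.HasEigenvalue μ) :
    IsLeast {i : ℕ | 0 < i ∧ LinearMap.ker ((f - μ • 1) ^ i) =
      LinearMap.ker ((f - μ • 1) ^ (i + 1))} (f.maxGenEigenspaceIndex μ) := by
  refine ⟨⟨Nat.pos_of_ne_zero fun h0 => ?_, ?_⟩, fun i ⟨_, hi⟩ => maxGenEigenspaceIndex_le ?_⟩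
  · have hbot : f.maxGenEigenspace μ = ⊥ := by
      rw [f.maxGenEigenspace_eq, h0, Nat.cast_zero, Module.End.genEigenspace_zero]
    exact hμ.le le_top hbot
  · simp only [← Module.End.genEigenspace_nat]
    exact ((f.genEigenspace μ).monotone (Nat.cast_le.2 (Nat.le_succ _))).antisymm
      ((f.genEigenspace_le_maximal μ _).trans (f.maxGenEigenspace_eq μ).le)
  · intro x hx
    obtain ⟨l, hl⟩ := (f.mem_maxGenEigenspace μ x).1 hx
    rw [Module.End.genEigenspace_nat, Module.End.ker_pow_constant hi l]
    exact Module.End.pow_map_zero_of_le (Nat.le_add_left l i) hl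

theorem isTheta_seminorm_pow {𝕜 V : Type*} [RCLike 𝕜] [AddCommGroup V] [Module 𝕜 V]
    [FiniteDimensional 𝕜 V] {f : Module.End 𝕜 V} (htop : ⨆ μ, f.maxGenEigenspace μ = ⊤) {ρ : ℝ}
    (hρ : 0 < ρ) (hle : ∀ μ, f.HasEigenvalue μ → ‖μ‖ ≤ ρ) {m : ℕ}
    (hm : IsGreatest (f.maxGenEigenspaceIndex '' {μ | f.HasEigenvalue μ ∧ ‖μ‖ = ρ}) (m + 1))
    {N : Seminorm 𝕜 (Module.End 𝕜 V)} (hN : ∀ g, N g = 0 → g = 0) :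
    (fun n : ℕ => N (f ^ n)) =Θ[atTop] fun n : ℕ => (n : ℝ) ^ m * ρ ^ n := by
  let _ : Norm (Module.End 𝕜 V) := ⟨N⟩
  have core : NormedSpace.Core 𝕜 (Module.End 𝕜 V) :=
    ⟨⟨apply_nonneg N, map_smul_eq_mul N, map_add_le_add N⟩,
      fun g => ⟨hN g, fun h => h ▸ map_zero N⟩⟩
  let _ : NormedAddCommGroup (Module.End 𝕜 V) := NormedAddCommGroup.ofCore core
  let _ : NormedSpace 𝕜 (Module.End 𝕜 V) := NormedSpace.ofCore core
  constructor
  · have hperiph : ∀ μ, f.HasEigenvalue μ → ‖μ‖ = ρ →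
        f.maxGenEigenspace μ ≤ f.genEigenspace μ (m + 1 : ℕ) := fun μ hμ hμρ => by
      rw [f.maxGenEigenspace_eq]
      exact (f.genEigenspace μ).monotone (Nat.cast_le.2 (hm.2 ⟨μ, ⟨hμ, hμρ⟩, rfl⟩))
    exact (isBigO_map_pow htop hρ hle hperiph LinearMap.id).norm_left
  · obtain ⟨μ, ⟨-, hμρ⟩, hindex⟩ := hm.1
    obtain ⟨x, hx, hx0⟩ := exists_mem_genEigenspace_pow_apply_ne_zero hindex
    obtain ⟨φ, hφ⟩ := Module.Projective.exists_dual_ne_zero 𝕜 hx0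
    have hcoeff := isTheta_map_pow_apply_of_mem_genEigenspace (norm_pos_iff.1 (hμρ ▸ hρ)) hx hφ
    rw [hμρ] at hcoeff
    let Φ := LinearMap.toContinuousLinearMap (φ ∘ₗ LinearMap.applyₗ x)
    exact hcoeff.2.trans (Φ.isBigO_comp (fun n : ℕ => f ^ n) atTop).norm_right

section SpectralRadius

theorem exists_hasEigenvalue_ne_zero {K V : Type*} [Field K] [IsAlgClosed K] [AddCommGroup V]
    [Module K V] [FiniteDimensional K V] {f : Module.End K V} (hf : ¬ IsNilpotent f) :
    ∃ μ, f.HasEigenvalue μ ∧ μ ≠ 0 := by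
  contrapose! hf
  have hroots : f.charpoly.roots = Multiset.replicate f.charpoly.roots.card 0 :=
    Multiset.eq_replicate_card.2 fun μ hμ =>
      hf μ ((Module.End.hasEigenvalue_iff_isRoot_charpoly f μ).2
        (Polynomial.isRoot_of_mem_roots hμ))
  have hprod := (IsAlgClosed.splits f.charpoly).eq_prod_roots_of_monic f.charpoly_monic
  rw [hroots, Multiset.map_replicate, Multiset.prod_replicate, map_zero, sub_zero] at hprod
  have hcayley := f.aeval_self_charpoly
  rw [hprod, map_pow, Polynomial.aeval_X] at hcayley
  exact ⟨_, hcayley⟩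

variable {V : Type*} [AddCommGroup V] [Module ℂ V] [FiniteDimensional ℂ V] {f : Module.End ℂ V}

theorem norm_le_specRadEnd {μ : ℂ} (hμ : f.HasEigenvalue μ) : ‖μ‖ ≤ specRadEnd f := by
  have hroot : μ ∈ f.charpoly.roots :=
    (Polynomial.mem_roots f.charpoly_monic.ne_zero).2
      ((Module.End.hasEigenvalue_iff_isRoot_charpoly f μ).1 hμ)
  exact_mod_cast Multiset.le_sup (Multiset.mem_map_of_mem (fun z : ℂ => ‖z‖₊) hroot)

theorem specRadEnd_pos (hf : ¬ IsNilpotent f) : 0 < specRadEnd f := by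
  obtain ⟨μ, hμ, hμ0⟩ := exists_hasEigenvalue_ne_zero hf
  exact (norm_pos_iff.2 hμ0).trans_le (norm_le_specRadEnd hμ)

end SpectralRadius

/-- For a non-nilpotent endomorphism `f` of a nonzero finite-dimensional complex
vector space and any norm `N` on `End(V)`, the polynomial growth rate
`s(f) = lim_n (log N(f^n) - n·log ρ(f)) / log n` equals `k - 1`, where `k` is the
maximum, over all eigenvalues `λ` of `f` with `|λ| = ρ(f)`, of the least positive
integer `j` with `ker((f - λ·id)^j) = ker((f - λ·id)^{j+1})`. -/
theorem polynomialGrowthRate_eq_max_jordan_size_sub_one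
    (V : Type*) [AddCommGroup V] [Module ℂ V] [FiniteDimensional ℂ V]
    [Nontrivial V] (f : Module.End ℂ V) (hf : ¬ IsNilpotent f)
    (N : Module.End ℂ V → ℝ)
    (hN0 : ∀ g, 0 ≤ N g)
    (hN1 : ∀ g, N g = 0 ↔ g = 0)
    (hN2 : ∀ (c : ℂ) (g : Module.End ℂ V), N (c • g) = ‖c‖ * N g)
    (hN3 : ∀ g h : Module.End ℂ V, N (g + h) ≤ N g + N h)
    (k : ℕ)
    (hk : IsGreatest {j : ℕ | ∃ lam : ℂ,
        (LinearMap.charpoly f).IsRoot lam ∧ ‖lam‖ = specRadEnd f ∧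
        IsLeast {i : ℕ | 0 < i ∧
          LinearMap.ker ((f - lam • 1) ^ i) =
            LinearMap.ker ((f - lam • 1) ^ (i + 1))} j} k) :
    Filter.Tendsto
      (fun n : ℕ =>
        (Real.log (N (f ^ n)) - n * Real.log (specRadEnd f)) / Real.log n)
      Filter.atTop (nhds ((k : ℝ) - 1)) := by
  have hindex : {j : ℕ | ∃ lam : ℂ, (LinearMap.charpoly f).IsRoot lam ∧ ‖lam‖ = specRadEnd f ∧
      IsLeast {i : ℕ | 0 < i ∧ LinearMap.ker ((f - lam • 1) ^ i) =
        LinearMap.ker ((f - lam • 1) ^ (i + 1))} j} =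
      f.maxGenEigenspaceIndex '' {μ | f.HasEigenvalue μ ∧ ‖μ‖ = specRadEnd f} := by
    ext j
    simp only [← Module.End.hasEigenvalue_iff_isRoot_charpoly]
    constructor
    · rintro ⟨μ, hμ, hnorm, hj⟩
      exact ⟨μ, ⟨hμ, hnorm⟩, (isLeast_ker_pow_eq_ker_pow_succ hμ).unique hj⟩
    · rintro ⟨μ, ⟨hμ, hnorm⟩, rfl⟩
      exact ⟨μ, hμ, hnorm, isLeast_ker_pow_eq_ker_pow_succ hμ⟩
  obtain ⟨m, rfl⟩ : ∃ m, k = m + 1 := by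
    obtain ⟨_, _, _, hleast⟩ := hk.1
    exact Nat.exists_eq_add_one.2 hleast.1.1
  rw [hindex] at hk
  have hρ := specRadEnd_pos hf
  have htheta := isTheta_seminorm_pow f.iSup_maxGenEigenspace_eq_top hρ
    (fun _ => norm_le_specRadEnd) hk (N := Seminorm.of N hN3 hN2) fun g => (hN1 g).1
  rw [Nat.cast_add_one, add_sub_cancel_right]
  exact tendsto_log_sub_mul_log_div_log hρ.ne' htheta
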